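/- Fix μ ∈ (0,1/2], ε > 0, ℓ ∈ ℝ, a vertex v ∈ ℤ, and a profile η : ℤ → ℝ such that v is two-sidedly ε-flat: for all j ≥ 0 and n ≥ 0, (1/(j+n+1))·∑_{u=v−j}^{v+n} η(u) ∈ [ℓ−ε, ℓ+ε]. Apply any finite sequence of elementary updates on arbitrary edges of ℤ, where an update on ⟨u,u+1⟩ replaces (η(u), η(u+1)) by ((1−μ)η(u)+μη(u+1), μη(u)+(1−μ)η(u+1)). Then after the update sequence, the value at vertex v lies in [ℓ−6ε, ℓ+6ε]. -/

import Mathlib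

/-- The elementary Deffuant-type `μ`-averaging update on the edge `⟨u, u+1⟩` of `ℤ`
for a real-valued opinion profile. -/
noncomputable def deffUpdate (μ : ℝ) (u : ℤ) (η : ℤ → ℝ) : ℤ → ℝ := fun v =>
  if v = u then (1 - μ) * η u + μ * η (u + 1)
  else if v = u + 1 then μ * η u + (1 - μ) * η (u + 1)
  else η v

/-!
By linearity, the final value at `v` is a weighted average `∑ ξ x * η x` of the initial profile,
where the weights `ξ` arise from the unit mass at `v` by running the updates in reverse order
(the *sharing a drink* procedure). Updates preserve unimodality, so every nonempty superlevel set
`{t ≤ ξ}` is an interval containing the mode `w` of `ξ`, and flatness at `v` bounds the sum of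
`η - ℓ` over it by `ε` times the sum of its length and `2 * |w - v|`. Integrating over the levels
`t` gives `|∑ ξ x * (η x - ℓ)| ≤ ε * (∑ ξ x + 2 * |w - v| * ξ w)`. Finally
`ξ w ≤ 1 / (|w - v| + 1)`, so that the total is at most `3 * ε`.
-/

open Finset MeasureTheory

section Superlevel

variable {ι : Type*} (s : Finset ι) {ξ : ι → ℝ} {M : ℝ}

theorem intervalIntegrable_ite_le (c d a b : ℝ) :
    IntervalIntegrable (fun t ↦ if t ≤ c then d else 0) volume a b :=
  ⟨intervalIntegrable_const.1.indicator measurableSet_Iic,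
    intervalIntegrable_const.2.indicator measurableSet_Iic⟩

theorem intervalIntegrable_sum_superlevel (ξ h : ι → ℝ) (a b : ℝ) :
    IntervalIntegrable (fun t ↦ ∑ x ∈ s with t ≤ ξ x, h x) volume a b := by
  simp_rw [sum_filter]
  simpa only [Finset.sum_fn] using
    IntervalIntegrable.sum s fun x _ ↦ intervalIntegrable_ite_le (ξ x) (h x) a b

theorem sum_mul_eq_integral_sum_superlevel (hξ : ∀ x ∈ s, ξ x ∈ Set.Icc 0 M) (h : ι → ℝ) :
    ∑ x ∈ s, ξ x * h x = ∫ t in 0..M, ∑ x ∈ s with t ≤ ξ x, h x := by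
  have term_eq (x) (hx : x ∈ s) : ∫ t in 0..M, (if t ≤ ξ x then h x else 0) = ξ x * h x := by
    simpa [Set.indicator_apply] using
      intervalIntegral.integral_indicator (f := fun _ ↦ h x) (μ := volume) (hξ x hx)
  simp_rw [sum_filter]
  rw [intervalIntegral.integral_finsetSum fun x _ ↦ intervalIntegrable_ite_le (ξ x) (h x) 0 M,
    sum_congr rfl term_eq]

theorem abs_sum_mul_le_of_abs_sum_superlevel_le (hM : 0 ≤ M) (hξ : ∀ x ∈ s, ξ x ∈ Set.Icc 0 M)
    {h : ι → ℝ} {B C : ℝ}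
    (hle : ∀ t ∈ Set.Ioc 0 M, |∑ x ∈ s with t ≤ ξ x, h x| ≤ B * #{x ∈ s | t ≤ ξ x} + C) :
    |∑ x ∈ s, ξ x * h x| ≤ B * ∑ x ∈ s, ξ x + C * M := by
  have card_eq (t : ℝ) : (#{x ∈ s | t ≤ ξ x} : ℝ) = ∑ x ∈ s with t ≤ ξ x, 1 := by simp
  have card_int := (intervalIntegrable_sum_superlevel s ξ (fun _ ↦ 1) 0 M).const_mul B
  simp_rw [card_eq] at hle
  calc |∑ x ∈ s, ξ x * h x|
      = ‖∫ t in 0..M, ∑ x ∈ s with t ≤ ξ x, h x‖ := by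
        rw [sum_mul_eq_integral_sum_superlevel s hξ, Real.norm_eq_abs]
    _ ≤ ∫ t in 0..M, (B * (∑ x ∈ s with t ≤ ξ x, 1) + C) :=
        intervalIntegral.norm_integral_le_of_norm_le hM (.of_forall hle)
          (card_int.add intervalIntegrable_const)
    _ = B * ∑ x ∈ s, ξ x + C * M := by
        rw [intervalIntegral.integral_add card_int intervalIntegrable_const,
          intervalIntegral.integral_const_mul, ← sum_mul_eq_integral_sum_superlevel s hξ]
        simp [mul_comm]

end Superlevel

/-- Weak unimodality (quasiconcavity): a value between two points is never below both of the
outer values. Equivalently, all superlevel sets are order-connected; no mode is singled out. -/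
def IsUnimodal {α β : Type*} [Preorder α] [LinearOrder β] (f : α → β) : Prop :=
  ∀ ⦃a b c⦄, a ≤ b → b ≤ c → min (f a) (f c) ≤ f b

theorem isUnimodal_single {α : Type*} [PartialOrder α] [DecidableEq α] (w : α) :
    IsUnimodal (Pi.single w (1 : ℝ)) := by
  intro a b c hab hbc
  by_cases hb : b = w
  · subst hb
    have le_one (x : α) : (Pi.single b 1 : α → ℝ) x ≤ 1 := by
      rw [Pi.single_apply]
      split_ifs <;> norm_num
    rw [Pi.single_eq_same]
    exact min_le_of_left_le (le_one a)
  · have : a ≠ w ∨ c ≠ w := by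
      by_contra! h
      exact hb (le_antisymm (h.2 ▸ hbc) (h.1 ▸ hab))
    rcases this with h | h <;> simp [h, hb]

theorem IsUnimodal.exists_filter_Icc_eq_Icc {α β : Type*} [LinearOrder α] [LocallyFiniteOrder α]
    [LinearOrder β] {f : α → β} (hf : IsUnimodal f) {p q w : α} {t : β} (hw : w ∈ Icc p q)
    (ht : t ≤ f w) : ∃ a b, w ∈ Icc a b ∧ {x ∈ Icc p q | t ≤ f x} = Icc a b := by
  set S := {x ∈ Icc p q | t ≤ f x} with hS
  have hwS : w ∈ S := mem_filter.2 ⟨hw, ht⟩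
  have hne : S.Nonempty := ⟨w, hwS⟩
  refine ⟨S.min' hne, S.max' hne, mem_Icc.2 ⟨S.min'_le w hwS, S.le_max' w hwS⟩, ?_⟩
  ext x
  refine ⟨fun hx ↦ mem_Icc.2 ⟨S.min'_le x hx, S.le_max' x hx⟩, fun hx ↦ ?_⟩
  obtain ⟨hax, hxb⟩ := mem_Icc.1 hx
  have ha := S.min'_mem hne
  have hb := S.max'_mem hne
  simp only [hS, mem_filter, mem_Icc] at ha hb ⊢
  exact ⟨⟨ha.1.1.trans hax, hxb.trans hb.1.2⟩, (le_min ha.2 hb.2).trans (hf hax hxb)⟩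

theorem abs_sum_le_of_disjoint {ι : Type*} [DecidableEq ι] {I G : Finset ι} (hdisj : Disjoint I G)
    {h : ι → ℝ} {ε : ℝ} (hG : |∑ x ∈ G, h x| ≤ ε * #G)
    (hIG : |∑ x ∈ I ∪ G, h x| ≤ ε * #(I ∪ G)) :
    |∑ x ∈ I, h x| ≤ ε * #I + ε * (2 * #G) := by
  rw [sum_union hdisj, card_union_of_disjoint hdisj] at hIG
  push_cast at hIG
  rw [abs_le] at *
  constructor <;> linarith

/-- The vertex `v` is two-sidedly `ε`-flat around the mean `ℓ` in the profile `η`. The bound on the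
average over each interval containing `v` is multiplied out by the number of vertices. -/
def IsTwoSidedFlat (ε ℓ : ℝ) (v : ℤ) (η : ℤ → ℝ) : Prop :=
  ∀ ⦃a b⦄, a ≤ v → v ≤ b → |∑ x ∈ Icc a b, (η x - ℓ)| ≤ ε * #(Icc a b)

namespace IsTwoSidedFlat

variable {ε ℓ : ℝ} {v : ℤ} {η : ℤ → ℝ}

theorem of_average_mem
    (havg : ∀ j n : ℕ, ((j : ℝ) + n + 1)⁻¹ * ∑ u ∈ Icc (v - (j : ℤ)) (v + (n : ℤ)), η u ∈
      Set.Icc (ℓ - ε) (ℓ + ε)) : IsTwoSidedFlat ε ℓ v η := by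
  intro a b hav hvb
  obtain ⟨j, rfl⟩ : ∃ j : ℕ, a = v - j := ⟨(v - a).toNat, by omega⟩
  obtain ⟨n, rfl⟩ : ∃ n : ℕ, b = v + n := ⟨(b - v).toNat, by omega⟩
  have card_eq : (#(Icc (v - (j : ℤ)) (v + n)) : ℝ) = j + n + 1 := by
    rw [Int.card_Icc, show (v + n + 1 - (v - j) : ℤ).toNat = j + n + 1 by omega]
    push_cast
    rfl
  have bounds := havg j n
  rw [inv_mul_eq_div, Set.mem_Icc, le_div_iff₀ (by positivity),
    div_le_iff₀ (by positivity)] at bounds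
  rw [sum_sub_distrib, sum_const, nsmul_eq_mul, card_eq, abs_le]
  constructor <;> linarith

theorem nonneg (h : IsTwoSidedFlat ε ℓ v η) : 0 ≤ ε :=
  (abs_nonneg _).trans (by simpa using h le_rfl le_rfl)

theorem abs_sum_Icc_le (h : IsTwoSidedFlat ε ℓ v η) {a b w : ℤ} (hw : w ∈ Icc a b) :
    |∑ x ∈ Icc a b, (η x - ℓ)| ≤ ε * #(Icc a b) + ε * (2 * |(w - v : ℤ)|) := by
  obtain ⟨haw, hwb⟩ := mem_Icc.1 hw
  have hε := h.nonneg
  by_cases hv : v ∈ Icc a b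
  · obtain ⟨hav, hvb⟩ := mem_Icc.1 hv
    exact (h hav hvb).trans (le_add_of_nonneg_right (by positivity))
  obtain ⟨p, q, hpv, hvq, hdisj, hull_eq, hcard⟩ : ∃ p q, p ≤ v ∧ v ≤ q ∧
      Disjoint (Icc a b) (Icc p q) ∧ Icc a b ∪ Icc p q = Icc (min a p) (max b q) ∧
      (#(Icc p q) : ℤ) ≤ |w - v| := by
    simp only [disjoint_left, Finset.ext_iff, mem_union, mem_Icc, Int.card_Icc, not_and, not_le]
      at hv ⊢
    rcases lt_or_ge v a with hva | hav
    · exact ⟨v, a - 1, by omega, by omega, by omega, by omega, by grind⟩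
    · have := hv hav
      exact ⟨b + 1, v, by omega, by omega, by omega, by omega, by grind⟩
  have hull_le := h ((min_le_right a p).trans hpv) (hvq.trans (le_max_right b q))
  rw [← hull_eq] at hull_le
  refine (abs_sum_le_of_disjoint hdisj (h hpv hvq) hull_le).trans ?_
  gcongr
  exact_mod_cast hcard

end IsTwoSidedFlat

theorem max_swap_lt_min_swap {u x y : ℤ} (hxy : x < y) (hne : Equiv.swap u (u + 1) x ≠ y) :
    max x (Equiv.swap u (u + 1) x) < min y (Equiv.swap u (u + 1) y) := by
  grind

section Update

variable {μ : ℝ} {u : ℤ} {g : ℤ → ℝ}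

theorem deffUpdate_apply_eq_swap (μ : ℝ) (u : ℤ) (g : ℤ → ℝ) (x : ℤ) :
    deffUpdate μ u g x = (1 - μ) * g x + μ * g (Equiv.swap u (u + 1) x) := by
  grind [deffUpdate]

theorem deffUpdate_apply_eq_add_single (μ : ℝ) (u : ℤ) (g : ℤ → ℝ) (x : ℤ) :
    deffUpdate μ u g x =
      g x + μ * (g (u + 1) - g u) * ((Pi.single u 1 - Pi.single (u + 1) 1 : ℤ → ℝ) x) := by
  grind [deffUpdate, Pi.sub_apply]

theorem deffUpdate_mem_of_convex (hμ : μ ∈ Set.Icc 0 1) {C : Set ℝ} (hC : Convex ℝ C) {x : ℤ}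
    (hx : g x ∈ C) (hswap : g (Equiv.swap u (u + 1) x) ∈ C) : deffUpdate μ u g x ∈ C := by
  rw [deffUpdate_apply_eq_swap]
  exact hC hx hswap (sub_nonneg.2 hμ.2) hμ.1 (sub_add_cancel 1 μ)

theorem le_deffUpdate_and_deffUpdate_le_of_lt (hμ : μ ∈ Set.Icc 0 (1 / 2)) {x y : ℤ}
    (hxy : Equiv.swap u (u + 1) x = y) (hlt : deffUpdate μ u g y < deffUpdate μ u g x) :
    g y ≤ deffUpdate μ u g y ∧ deffUpdate μ u g x ≤ g x := by
  obtain ⟨hμ₀, hμ₁⟩ := hμ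
  subst hxy
  simp only [deffUpdate_apply_eq_swap, Equiv.swap_apply_self] at hlt ⊢
  have : g (Equiv.swap u (u + 1) x) ≤ g x := by nlinarith
  constructor <;> nlinarith

theorem exists_lt_apply_of_lt_deffUpdate (hμ : μ ∈ Set.Icc 0 1) {x : ℤ} {t : ℝ}
    (ht : t < deffUpdate μ u g x) : ∃ y, (y = x ∨ y = Equiv.swap u (u + 1) x) ∧ t < g y := by
  by_contra! hle
  exact ht.not_ge
    (deffUpdate_mem_of_convex hμ (convex_Iic t) (hle x (.inl rfl)) (hle _ (.inr rfl)))

theorem exists_apply_le_of_deffUpdate_le (hμ : μ ∈ Set.Icc 0 1) {x : ℤ} {t : ℝ}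
    (ht : deffUpdate μ u g x ≤ t) : ∃ y, (y = x ∨ y = Equiv.swap u (u + 1) x) ∧ g y ≤ t := by
  by_contra! hlt
  exact ht.not_gt
    (deffUpdate_mem_of_convex hμ (convex_Ioi t) (hlt x (.inl rfl)) (hlt _ (.inr rfl)))

theorem isUnimodal_deffUpdate (hμ : μ ∈ Set.Icc 0 (1 / 2)) (hg : IsUnimodal g) (u : ℤ) :
    IsUnimodal (deffUpdate μ u g) := by
  intro a b c hab hbc
  by_contra! hlt
  obtain ⟨hlt_a, hlt_c⟩ := lt_min_iff.1 hlt
  have hab : a < b := hab.lt_of_ne (by rintro rfl; exact hlt_a.false)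
  have hbc : b < c := hbc.lt_of_ne (by rintro rfl; exact hlt_c.false)
  have hμ' := Set.Icc_subset_Icc_right one_half_lt_one.le hμ
  set σ := Equiv.swap u (u + 1)
  -- `a < b < c` is a valley of the updated profile; a valley `x < y < z` of `g` at the same level
  -- is found with each of `x`, `y`, `z` either unchanged or replaced by its partner under `σ`.
  suffices ∃ x y z, x < y ∧ y < z ∧ deffUpdate μ u g b < g x ∧ g y ≤ deffUpdate μ u g b ∧
      deffUpdate μ u g b < g z by
    obtain ⟨x, y, z, hxy, hyz, hx, hy, hz⟩ := this
    exact (lt_min hx hz).not_ge ((hg hxy.le hyz.le).trans hy)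
  obtain ⟨a', ha', hga'⟩ := exists_lt_apply_of_lt_deffUpdate hμ' hlt_a
  obtain ⟨c', hc', hgc'⟩ := exists_lt_apply_of_lt_deffUpdate hμ' hlt_c
  by_cases hσa : σ a = b
  · obtain ⟨hgb, hga⟩ := le_deffUpdate_and_deffUpdate_le_of_lt hμ hσa hlt_a
    have := max_swap_lt_min_swap hbc (u := u) (by grind)
    exact ⟨a, b, c', hab, by grind, hlt_a.trans_le hga, hgb, hgc'⟩
  by_cases hσb : σ b = c
  · have hσc : σ c = b := by rw [← hσb, Equiv.swap_apply_self]
    obtain ⟨hgb, hgc⟩ := le_deffUpdate_and_deffUpdate_le_of_lt hμ hσc hlt_c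
    have := max_swap_lt_min_swap hab hσa
    exact ⟨a', b, c, by grind, hbc, hga', hgb, hlt_c.trans_le hgc⟩
  · obtain ⟨b', hb', hgb'⟩ := exists_apply_le_of_deffUpdate_le hμ' (le_refl (deffUpdate μ u g b))
    have := max_swap_lt_min_swap hab hσa
    have := max_swap_lt_min_swap hbc hσb
    exact ⟨a', b', c', by grind, by grind, hga', hgb', hgc'⟩

theorem sum_deffUpdate (μ : ℝ) (u : ℤ) (g : ℤ → ℝ) (s : Finset ℤ) :
    ∑ x ∈ s, deffUpdate μ u g x = ∑ x ∈ s, g x +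
      μ * (g (u + 1) - g u) * ((if u ∈ s then 1 else 0) - (if u + 1 ∈ s then 1 else 0)) := by
  simp only [deffUpdate_apply_eq_add_single, Pi.sub_apply, sum_add_distrib, ← mul_sum,
    sum_sub_distrib, sum_pi_single']

theorem sum_mul_deffUpdate (μ : ℝ) {u : ℤ} (f g : ℤ → ℝ) {s : Finset ℤ} (hu : u ∈ s)
    (hu' : u + 1 ∈ s) :
    ∑ x ∈ s, f x * deffUpdate μ u g x =
      ∑ x ∈ s, f x * g x + μ * (g (u + 1) - g u) * (f u - f (u + 1)) := by
  have single (y) (hy : y ∈ s) : ∑ x ∈ s, f x * (Pi.single y 1 : ℤ → ℝ) x = f y := by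
    simp [Pi.single_apply, hy]
  simp only [deffUpdate_apply_eq_add_single, Pi.sub_apply, mul_add, mul_left_comm (f _),
    mul_sub (f _), sum_add_distrib, ← mul_sum, sum_sub_distrib, single _ hu, single _ hu']

theorem sum_mul_deffUpdate_comm (μ : ℝ) {u : ℤ} (f g : ℤ → ℝ) {s : Finset ℤ} (hu : u ∈ s)
    (hu' : u + 1 ∈ s) :
    ∑ x ∈ s, f x * deffUpdate μ u g x = ∑ x ∈ s, deffUpdate μ u f x * g x := by
  simp_rw [mul_comm _ (g _)]
  rw [sum_mul_deffUpdate μ g f hu hu']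
  simp_rw [mul_comm (g _), sum_mul_deffUpdate μ f g hu hu']
  ring

end Update

/-- The profile obtained from `η` by updating along the edges `⟨u, u + 1⟩`, `u ∈ l`, with the head
of `l` acting first. -/
noncomputable def deffRun (μ : ℝ) (l : List ℤ) (η : ℤ → ℝ) : ℤ → ℝ :=
  l.foldl (fun ξ u ↦ deffUpdate μ u ξ) η

section Run

variable {μ : ℝ}

theorem deffRun_induction {P : (ℤ → ℝ) → Prop} (hP : ∀ u g, P g → P (deffUpdate μ u g))
    {g : ℤ → ℝ} (hg : P g) (l : List ℤ) : P (deffRun μ l g) :=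
  l.foldlRecOn _ hg fun g hg u _ ↦ hP u g hg

theorem deffRun_const (μ : ℝ) (l : List ℤ) (c : ℝ) : deffRun μ l (fun _ ↦ c) = fun _ ↦ c := by
  refine deffRun_induction (P := (· = fun _ ↦ c)) ?_ rfl l
  rintro u _ rfl
  ext x
  rw [deffUpdate_apply_eq_swap]
  ring

theorem deffRun_nonneg (hμ : μ ∈ Set.Icc 0 1) {g : ℤ → ℝ} (hg : 0 ≤ g) (l : List ℤ) :
    0 ≤ deffRun μ l g :=
  deffRun_induction
    (fun _ _ hg x ↦ deffUpdate_mem_of_convex hμ (convex_Ici 0) (hg x) (hg _)) hg l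

theorem sum_mul_deffRun (μ : ℝ) {l : List ℤ} {s : Finset ℤ} (hs : ∀ u ∈ l, u ∈ s ∧ u + 1 ∈ s)
    (f g : ℤ → ℝ) :
    ∑ x ∈ s, f x * deffRun μ l g x = ∑ x ∈ s, deffRun μ l.reverse f x * g x := by
  induction l generalizing g with
  | nil => rfl
  | cons u l ih =>
    obtain ⟨⟨hu, hu'⟩, hl⟩ := List.forall_mem_cons.1 hs
    calc ∑ x ∈ s, f x * deffRun μ (u :: l) g x
        = ∑ x ∈ s, deffRun μ l.reverse f x * deffUpdate μ u g x := ih hl _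
      _ = ∑ x ∈ s, deffUpdate μ u (deffRun μ l.reverse f) x * g x :=
          sum_mul_deffUpdate_comm μ _ _ hu hu'
      _ = ∑ x ∈ s, deffRun μ (u :: l).reverse f x * g x := by
          simp [deffRun]

theorem deffRun_apply_eq_sum (μ : ℝ) {l : List ℤ} {s : Finset ℤ}
    (hs : ∀ u ∈ l, u ∈ s ∧ u + 1 ∈ s) {v : ℤ} (hv : v ∈ s) (η : ℤ → ℝ) :
    deffRun μ l η v = ∑ x ∈ s, deffRun μ l.reverse (Pi.single v 1) x * η x := by
  rw [← sum_mul_deffRun μ hs]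
  simp [Pi.single_apply, hv]

theorem exists_subset_Icc_and_edges_mem (l : List ℤ) (t : Finset ℤ) :
    ∃ a b, t ⊆ Icc a b ∧ ∀ u ∈ l, u ∈ Icc a b ∧ u + 1 ∈ Icc a b := by
  obtain ⟨a, ha⟩ := (t ∪ l.toFinset).bddBelow
  obtain ⟨b, hb⟩ := (t ∪ l.toFinset).bddAbove
  have bounds {x} (hx : x ∈ t ∪ l.toFinset) : a ≤ x ∧ x ≤ b := ⟨ha hx, hb hx⟩
  refine ⟨a, b + 1, fun x hx ↦ ?_, fun u hu ↦ ?_⟩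
  · have := bounds (mem_union_left _ hx)
    grind
  · have := bounds (mem_union_right t (List.mem_toFinset.2 hu))
    grind

theorem deffRun_single_apply_comm (μ : ℝ) (l : List ℤ) (v w : ℤ) :
    deffRun μ l (Pi.single w 1) v = deffRun μ l.reverse (Pi.single v 1) w := by
  obtain ⟨a, b, hvw, hl⟩ := exists_subset_Icc_and_edges_mem l {v, w}
  rw [deffRun_apply_eq_sum μ hl (hvw (by simp))]
  have hw : w ∈ Icc a b := hvw (by simp)
  simp [Pi.single_apply, mem_Icc.1 hw]

/-- The invariant behind `deffRun_single_apply_le`: the averages of `g` over the intervals starting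
at `v`, and the values to the left of `v`, do not exceed `c`. An update across the right end of such
an interval mixes three consecutive prefix sums; unimodality controls one across the left end. -/
structure IsPrefixBounded (c : ℝ) (v : ℤ) (g : ℤ → ℝ) : Prop where
  isUnimodal : IsUnimodal g
  apply_le_of_lt : ∀ x < v, g x ≤ c
  sum_Ico_le : ∀ b, v ≤ b → ∑ x ∈ Ico v b, g x ≤ (b - v) * c

namespace IsPrefixBounded

variable {c : ℝ} {u v : ℤ} {g : ℤ → ℝ}

theorem single {w : ℤ} (hvw : v ≤ w) :
    IsPrefixBounded (1 / (w - v + 1)) v (Pi.single w 1) where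
  isUnimodal := isUnimodal_single w
  apply_le_of_lt x hx := by
    have : (v : ℝ) ≤ w := by exact_mod_cast hvw
    rw [Pi.single_eq_of_ne (by omega)]
    exact div_nonneg zero_le_one (by linarith)
  sum_Ico_le b hvb := by
    have hvw' : (v : ℝ) ≤ w := by exact_mod_cast hvw
    have hvb' : (v : ℝ) ≤ b := by exact_mod_cast hvb
    rw [sum_pi_single', mul_one_div, le_div_iff₀ (by linarith)]
    split_ifs with hw
    · have : (w : ℝ) + 1 ≤ b := by exact_mod_cast (mem_Ico.1 hw).2
      linarith
    · linarith

theorem apply_le (hg : IsPrefixBounded c v g) {x : ℤ} (hx : x ≤ v) : g x ≤ c := by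
  rcases hx.lt_or_eq with hlt | rfl
  · exact hg.apply_le_of_lt x hlt
  · simpa [← sum_Ico_add_eq_sum_Ico_add_one le_rfl] using hg.sum_Ico_le (x + 1) (by omega)

theorem deffUpdate_apply_le (hμ : μ ∈ Set.Icc 0 1) (hg : IsPrefixBounded c v g) {x : ℤ}
    (hx : x < v) : deffUpdate μ u g x ≤ c :=
  deffUpdate_mem_of_convex hμ (convex_Iic c) (hg.apply_le hx.le) (hg.apply_le (by grind))

theorem sum_Ico_add_le (hμ : μ ∈ Set.Icc 0 (1 / 2)) (hg : IsPrefixBounded c v g) {b : ℤ}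
    (hvb : v ≤ b) :
    ∑ x ∈ Ico v (b + 1), g x + μ * (g (b + 1) - g b) ≤ ((b + 1 : ℤ) - v) * c := by
  obtain ⟨hμ₀, hμ₁⟩ := hμ
  have sum_b := sum_Ico_add_eq_sum_Ico_add_one hvb g
  have sum_b' := sum_Ico_add_eq_sum_Ico_add_one (hvb.trans (Int.le_add_one le_rfl)) g
  have hle₀ := hg.sum_Ico_le b hvb
  have hle₁ := hg.sum_Ico_le (b + 1) (by omega)
  have hle₂ := hg.sum_Ico_le (b + 1 + 1) (by omega)
  push_cast at *
  calc _ = (1 - 2 * μ) * ∑ x ∈ Ico v (b + 1), g x +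
        μ * (∑ x ∈ Ico v b, g x + ∑ x ∈ Ico v (b + 1 + 1), g x) := by
        rw [← sum_b', ← sum_b]; ring
    _ ≤ (1 - 2 * μ) * ((b + 1 - v) * c) + μ * ((b - v) * c + (b + 1 + 1 - v) * c) := by
        gcongr
        linarith
    _ = _ := by ring

theorem sum_Ico_deffUpdate_pred_le (hμ : μ ∈ Set.Icc 0 1) (hg : IsPrefixBounded c v g) {b : ℤ}
    (hvb : v < b) : ∑ x ∈ Ico v b, deffUpdate μ (v - 1) g x ≤ (b - v) * c := by
  rcases le_or_gt (g (v - 1)) (g v) with hle | hlt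
  · have h₀ : v - 1 ∉ Ico v b := by simp
    have h₁ : v - 1 + 1 ∈ Ico v b := by simpa
    rw [sum_deffUpdate, if_neg h₀, if_pos h₁, sub_add_cancel]
    nlinarith [hg.sum_Ico_le b hvb.le, hμ.1]
  · have apply_le_c (x) (hx : v - 1 ≤ x) : g x ≤ c := by
      rcases hx.lt_or_eq with hvx | rfl
      · have := hg.isUnimodal (show v - 1 ≤ v by omega) (show v ≤ x by omega)
        have := (min_le_iff.1 this).resolve_left hlt.not_ge
        exact this.trans (hg.apply_le le_rfl)
      · exact hg.apply_le (by omega)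
    have := sum_le_card_nsmul (Ico v b) (deffUpdate μ (v - 1) g) c fun x hx ↦
      deffUpdate_mem_of_convex hμ (convex_Iic c) (apply_le_c x (by grind))
        (apply_le_c _ (by grind))
    rwa [nsmul_eq_mul, ← Int.cast_natCast, Int.card_Ico_of_le _ _ hvb.le, Int.cast_sub] at this

protected theorem deffUpdate (hμ : μ ∈ Set.Icc 0 (1 / 2)) (hg : IsPrefixBounded c v g) (u : ℤ) :
    IsPrefixBounded c v (deffUpdate μ u g) where
  isUnimodal := isUnimodal_deffUpdate hμ hg.isUnimodal u
  apply_le_of_lt x hx := hg.deffUpdate_apply_le (Set.Icc_subset_Icc_right one_half_lt_one.le hμ) hx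
  sum_Ico_le b hvb := by
    by_cases hright : u ∈ Ico v b ∧ u + 1 ∉ Ico v b
    · obtain rfl : b = u + 1 := by grind
      simpa [sum_deffUpdate, hright] using hg.sum_Ico_add_le hμ (mem_Ico.1 hright.1).1
    by_cases hleft : u ∉ Ico v b ∧ u + 1 ∈ Ico v b
    · obtain rfl : u = v - 1 := by grind
      exact hg.sum_Ico_deffUpdate_pred_le (Set.Icc_subset_Icc_right one_half_lt_one.le hμ)
        (by grind)
    have hiff : u ∈ Ico v b ↔ u + 1 ∈ Ico v b := by tauto
    simpa [sum_deffUpdate, hiff] using hg.sum_Ico_le b hvb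

end IsPrefixBounded

theorem deffRun_single_apply_le_of_le (hμ : μ ∈ Set.Icc 0 (1 / 2)) (l : List ℤ) {v w : ℤ}
    (hvw : v ≤ w) : deffRun μ l (Pi.single w 1) v ≤ 1 / (w - v + 1) :=
  (deffRun_induction (fun u _ hg ↦ hg.deffUpdate hμ u) (IsPrefixBounded.single hvw) l).apply_le
    le_rfl

theorem deffRun_single_apply_le (hμ : μ ∈ Set.Icc 0 (1 / 2)) (l : List ℤ) (v w : ℤ) :
    deffRun μ l (Pi.single v 1) w ≤ 1 / (|(w - v : ℤ)| + 1) := by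
  rcases le_total v w with hvw | hwv
  · rw [deffRun_single_apply_comm, abs_of_nonneg (sub_nonneg.2 hvw), Int.cast_sub]
    exact deffRun_single_apply_le_of_le hμ _ hvw
  · rw [abs_sub_comm, abs_of_nonneg (sub_nonneg.2 hwv), Int.cast_sub]
    exact deffRun_single_apply_le_of_le hμ l hwv

end Run

theorem IsTwoSidedFlat.abs_sum_mul_le {ε ℓ : ℝ} {v : ℤ} {η : ℤ → ℝ} (h : IsTwoSidedFlat ε ℓ v η)
    {ξ : ℤ → ℝ} (hξ : IsUnimodal ξ) {a b w : ℤ} (hw : w ∈ Icc a b)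
    (hmem : ∀ x ∈ Icc a b, ξ x ∈ Set.Icc 0 (ξ w)) :
    |∑ x ∈ Icc a b, ξ x * (η x - ℓ)| ≤
      ε * ∑ x ∈ Icc a b, ξ x + ε * (2 * |(w - v : ℤ)|) * ξ w := by
  refine abs_sum_mul_le_of_abs_sum_superlevel_le _ (hmem w hw).1 hmem fun t ht ↦ ?_
  obtain ⟨p, q, hwpq, hpq⟩ := hξ.exists_filter_Icc_eq_Icc hw ht.2
  rw [hpq]
  exact h.abs_sum_Icc_le hwpq

theorem two_sided_eps_flat_stays_within_general {μ : ℝ} (hμ : μ ∈ Set.Icc 0 (1 / 2)) {ε ℓ : ℝ}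
    {v : ℤ} {η : ℤ → ℝ} (h : IsTwoSidedFlat ε ℓ v η) (l : List ℤ) :
    deffRun μ l η v ∈ Set.Icc (ℓ - 3 * ε) (ℓ + 3 * ε) := by
  obtain ⟨a, b, hv, hl⟩ := exists_subset_Icc_and_edges_mem l {v}
  have hv := hv (mem_singleton_self v)
  set ξ := deffRun μ l.reverse (Pi.single v 1) with hξ
  have ξ_nonneg : 0 ≤ ξ :=
    deffRun_nonneg (Set.Icc_subset_Icc_right one_half_lt_one.le hμ)
      (Pi.single_nonneg.2 zero_le_one) _
  have ξ_unimodal : IsUnimodal ξ :=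
    deffRun_induction (P := IsUnimodal) (fun u _ hg ↦ isUnimodal_deffUpdate hμ hg u)
      (isUnimodal_single v) _
  have ξ_sum : ∑ x ∈ Icc a b, ξ x = 1 := by
    simpa [deffRun_const] using (deffRun_apply_eq_sum μ hl hv fun _ ↦ 1).symm
  obtain ⟨w, hw, ξ_le⟩ := exists_max_image (Icc a b) ξ ⟨v, hv⟩
  have mode_le : |(w - v : ℤ)| * ξ w ≤ 1 := by
    have hle := deffRun_single_apply_le hμ l.reverse v w
    rw [← hξ, le_div_iff₀ (by positivity)] at hle
    have : 0 ≤ ξ w := ξ_nonneg w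
    linarith
  rw [← Set.mem_Icc_iff_abs_le, abs_sub_comm]
  calc |deffRun μ l η v - ℓ| = |∑ x ∈ Icc a b, ξ x * (η x - ℓ)| := by
        simp_rw [mul_sub, sum_sub_distrib, ← sum_mul, ξ_sum, one_mul,
          deffRun_apply_eq_sum μ hl hv η, hξ]
    _ ≤ ε * ∑ x ∈ Icc a b, ξ x + ε * (2 * |(w - v : ℤ)|) * ξ w :=
        h.abs_sum_mul_le ξ_unimodal hw fun x hx ↦ ⟨ξ_nonneg x, ξ_le x hx⟩
    _ = ε + 2 * ε * (|(w - v : ℤ)| * ξ w) := by rw [ξ_sum]; ring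
    _ ≤ ε + 2 * ε * 1 := by have := h.nonneg; gcongr
    _ = 3 * ε := by ring

/-- If vertex `v` is two-sidedly `ε`-flat with respect to the profile `η`, then after
any finite sequence of elementary updates on arbitrary edges of `ℤ`, the value at
vertex `v` lies within `6ε` of `ℓ`. -/
theorem two_sided_eps_flat_stays_within (μ : ℝ) (hμ : μ ∈ Set.Ioc (0 : ℝ) (1 / 2))
    (ε : ℝ) (hε : 0 < ε) (ℓ : ℝ) (v : ℤ) (η : ℤ → ℝ)
    (hflat : ∀ j n : ℕ,
      ((j : ℝ) + (n : ℝ) + 1)⁻¹ * ∑ u ∈ Finset.Icc (v - (j : ℤ)) (v + (n : ℤ)), η u ∈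
        Set.Icc (ℓ - ε) (ℓ + ε))
    (l : List ℤ) :
    (l.foldl (fun ξ u => deffUpdate μ u ξ) η) v ∈ Set.Icc (ℓ - 6 * ε) (ℓ + 6 * ε) :=
  Set.Icc_subset_Icc (by linarith) (by linarith)
    (two_sided_eps_flat_stays_within_general ⟨hμ.1.le, hμ.2⟩ (.of_average_mem hflat) l)
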